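/- Jawerth embedding for sequence spaces with all exponents variable: Let n ∈ ℕ, let p₀, p₁, q ∈ P^{log}(ℝⁿ) with sup p₀ < ∞, and let s₀, s₁ : ℝⁿ → ℝ be locally log-Hölder continuous. Assume inf_{x∈ℝⁿ}(s₀(x) − s₁(x)) > 0 and s₀(x) − n/p₀(x) = s₁(x) − n/p₁(x) for all x ∈ ℝⁿ. Then f^{s₀(·)}_{p₀(·),q(·)}(ℝⁿ) ↪ b^{s₁(·)}_{p₁(·),p₀(·)}(ℝⁿ): there exists C > 0 such that for every complex-valued sequence γ = (γ_{j,m})_{j∈ℕ₀,m∈ℤⁿ}, ‖γ | b^{s₁(·)}_{p₁(·),p₀(·)}(ℝⁿ)‖ ≤ C ‖γ | f^{s₀(·)}_{p₀(·),q(·)}(ℝⁿ)‖. -/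

import Mathlib

/-!
After division by a number `lam` admissible for the `f`-norm, the `ℓ_q` norm is estimated from below
by the supremum, so that the functions `b j = (2 ^ (j s₀) |γ_j| / lam) ^ p₀` are all bounded by one
function `H` with `∫ H ≤ 1`. By the Sobolev condition (`pointwise_bound`), the `j`-th summand of the
Besov modular at level `T` is governed by
`∫ 2 ^ (jn) (b j 2 ^ (-jn) / T) ^ (p₁ / p₀)`,
with an essential supremum of `(b j 2 ^ (-jn) / T) ^ (1 / p₀)` where `p₁ = ∞`. The gap
`s₀ - s₁ ≥ δ` gives `p₁ / p₀ ≥ 1 + ε` for some `ε > 0`; hence, if `b j 2 ^ (-jn) ≤ T` pointwise, the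
variable exponent may be replaced by the constant `1 + ε`, and a problem with constant exponent
remains: find summable levels `T j` with `b j 2 ^ (-jn) ≤ T j` and
`∫ 2 ^ (jn) (b j 2 ^ (-jn) / T j) ^ (1 + ε) ≤ 2`.

Such levels are built in `exists_levels` from measures of level sets. If `b j > 2 ^ k` somewhere on
a dyadic cube of generation `j`, then `H ≥ 2 ^ k / K` on that whole cube (`cube_comparable`, the
place where log-Hölder continuity is used), so the corresponding level set of `H` has measure at
least `2 ^ (-jn)`. This restricts the generations that contribute at height `2 ^ k`, and the sum
over `j` becomes a geometric series. Where `b j ≤ 1` no comparison is needed, since there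
`∫ b j ^ (1 + ε) ≤ ∫ H` already suffices.
-/

open MeasureTheory ENNReal NNReal

noncomputable section

/-- The dyadic cube `Q_{j,m}` in `ℝⁿ`: centered at `2^{-j} m`, with sides parallel to the
coordinate axes and side length `2^{-j}`. -/
def Qcube (n : ℕ) (j : ℕ) (m : Fin n → ℤ) : Set (EuclideanSpace ℝ (Fin n)) :=
  {x | ∀ i, (2 : ℝ) ^ (-(j : ℝ)) * ((m i : ℝ) - 1 / 2) ≤ x i ∧
        x i < (2 : ℝ) ^ (-(j : ℝ)) * ((m i : ℝ) + 1 / 2)}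

/-- A function `g : ℝⁿ → ℝ` is locally log-Hölder continuous if there exists `c > 0` such
that `|g(x) − g(y)| ≤ c / log(e + 1/|x−y|)` for all `x, y ∈ ℝⁿ` (Euclidean distance). -/
def LocLogHolder {n : ℕ} (g : EuclideanSpace ℝ (Fin n) → ℝ) : Prop :=
  ∃ c : ℝ, 0 < c ∧ ∀ x y, |g x - g y| ≤ c / Real.log (Real.exp 1 + 1 / dist x y)

/-- A function `g : ℝⁿ → ℝ` is globally log-Hölder continuous if it is locally log-Hölder
continuous and in addition `|g(x) − g_∞| ≤ c / log(e + |x|)` for some `g_∞` and all `x`. -/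
def GlobLogHolder {n : ℕ} (g : EuclideanSpace ℝ (Fin n) → ℝ) : Prop :=
  LocLogHolder g ∧ ∃ c : ℝ, 0 < c ∧ ∃ g₀ : ℝ, ∀ x, |g x - g₀| ≤ c / Real.log (Real.exp 1 + ‖x‖)

/-- The class `P^{log}(ℝⁿ)` of measurable exponents `p : ℝⁿ → (0,∞]` with `inf p > 0` and
`1/p` globally log-Hölder continuous. -/
def PLog {n : ℕ} (p : EuclideanSpace ℝ (Fin n) → ℝ≥0∞) : Prop :=
  Measurable p ∧ (∃ c : ℝ≥0, 0 < c ∧ ∀ x, (c : ℝ≥0∞) ≤ p x) ∧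
    GlobLogHolder fun x => ((p x)⁻¹).toReal

/-- The modular `ρ_{p(·)}(g) = ∫_{{p<∞}} g(x)^{p(x)} dx + ess sup_{{p=∞}} g` of a
non-negative function `g`, for a variable exponent `p : ℝⁿ → (0,∞]`. -/
def varModular {n : ℕ} (p : EuclideanSpace ℝ (Fin n) → ℝ≥0∞)
    (g : EuclideanSpace ℝ (Fin n) → ℝ≥0∞) : ℝ≥0∞ :=
  (∫⁻ x in {x | p x ≠ ∞}, g x ^ (p x).toReal) + essSup g (volume.restrict {x | p x = ∞})

/-- The Luxemburg (quasi)norm `‖g | L_{p(·)}(ℝⁿ)‖ = inf {λ > 0 : ρ_{p(·)}(g/λ) ≤ 1}`. -/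
def luxNorm {n : ℕ} (p : EuclideanSpace ℝ (Fin n) → ℝ≥0∞)
    (g : EuclideanSpace ℝ (Fin n) → ℝ≥0∞) : ℝ≥0∞ :=
  sInf {lam : ℝ≥0∞ | 0 < lam ∧ varModular p (fun x => g x / lam) ≤ 1}

/-- The mixed modular
`ρ_{ℓ_{q(·)}(L_{p(·)})}((f_ν)) = Σ_ν inf {λ_ν > 0 : ρ_{p(·)}(f_ν / λ_ν^{1/q(·)}) ≤ 1}`,
with the convention `λ^{1/∞} = 1`. -/
def mixedModular {n : ℕ} (q p : EuclideanSpace ℝ (Fin n) → ℝ≥0∞)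
    (f : ℕ → EuclideanSpace ℝ (Fin n) → ℝ≥0∞) : ℝ≥0∞ :=
  ∑' ν : ℕ, sInf {lam : ℝ≥0∞ | 0 < lam ∧
    varModular p (fun x => f ν x / lam ^ ((q x)⁻¹).toReal) ≤ 1}

/-- The `ℓ_{q(·)}(L_{p(·)})` (quasi)norm
`‖(f_ν)‖ = inf {μ > 0 : ρ_{ℓ_{q(·)}(L_{p(·)})}((f_ν/μ)) ≤ 1}`. -/
def ellqLpNorm {n : ℕ} (q p : EuclideanSpace ℝ (Fin n) → ℝ≥0∞)
    (f : ℕ → EuclideanSpace ℝ (Fin n) → ℝ≥0∞) : ℝ≥0∞ :=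
  sInf {mu : ℝ≥0∞ | 0 < mu ∧ mixedModular q p (fun ν x => f ν x / mu) ≤ 1}

/-- The `L_{p(·)}(ℓ_{q(·)})` (quasi)norm: first the pointwise `ℓ_{q(x)}` norm (a supremum
where `q(x) = ∞`), then the `L_{p(·)}` Luxemburg norm. -/
def lpEllqNorm {n : ℕ} (p q : EuclideanSpace ℝ (Fin n) → ℝ≥0∞)
    (f : ℕ → EuclideanSpace ℝ (Fin n) → ℝ≥0∞) : ℝ≥0∞ :=
  luxNorm p fun x =>
    if q x = ∞ then ⨆ ν, f ν x
    else (∑' ν : ℕ, f ν x ^ (q x).toReal) ^ ((q x).toReal)⁻¹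

/-- The building blocks `x ↦ Σ_m |γ_{j,m}| 2^{j s(x)} χ_{j,m}(x)` of the sequence-space
quasinorms. -/
def seqBlocks {n : ℕ} (s : EuclideanSpace ℝ (Fin n) → ℝ) (γ : ℕ → (Fin n → ℤ) → ℂ)
    (j : ℕ) (x : EuclideanSpace ℝ (Fin n)) : ℝ≥0∞ :=
  (2 : ℝ≥0∞) ^ ((j : ℝ) * s x) *
    ∑' m : Fin n → ℤ, (‖γ j m‖₊ : ℝ≥0∞) * (Qcube n j m).indicator (fun _ => (1 : ℝ≥0∞)) x

/-- The Besov sequence quasinorm `‖γ | b^{s(·)}_{p(·),q(·)}(ℝⁿ)‖`. -/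
def bVarNorm (n : ℕ) (s : EuclideanSpace ℝ (Fin n) → ℝ)
    (p q : EuclideanSpace ℝ (Fin n) → ℝ≥0∞) (γ : ℕ → (Fin n → ℤ) → ℂ) : ℝ≥0∞ :=
  ellqLpNorm q p (seqBlocks s γ)

/-- The Triebel–Lizorkin sequence quasinorm `‖γ | f^{s(·)}_{p(·),q(·)}(ℝⁿ)‖`. -/
def fVarNorm (n : ℕ) (s : EuclideanSpace ℝ (Fin n) → ℝ)
    (p q : EuclideanSpace ℝ (Fin n) → ℝ≥0∞) (γ : ℕ → (Fin n → ℤ) → ℂ) : ℝ≥0∞ :=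
  lpEllqNorm p q (seqBlocks s γ)

/-! ### Dyadic cubes and log-Hölder oscillation -/

theorem mem_Qcube_iff {n : ℕ} (j : ℕ) (m : Fin n → ℤ) (x : EuclideanSpace ℝ (Fin n)) :
    x ∈ Qcube n j m ↔ m = fun i => ⌊(2 : ℝ) ^ (j : ℝ) * x i + 1 / 2⌋ := by
  have h2 : (0 : ℝ) < (2 : ℝ) ^ (j : ℝ) := by positivity
  simp only [Qcube, Set.mem_ofPred_eq, funext_iff]
  refine forall_congr' fun i => ?_
  rw [eq_comm, Int.floor_eq_iff, Real.rpow_neg (by norm_num), inv_mul_le_iff₀ h2,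
    lt_inv_mul_iff₀ h2]
  constructor <;> rintro ⟨h, h'⟩ <;> constructor <;> linarith

theorem seqBlocks_eq {n : ℕ} (s : EuclideanSpace ℝ (Fin n) → ℝ) (γ : ℕ → (Fin n → ℤ) → ℂ)
    {j : ℕ} {m : Fin n → ℤ} {x : EuclideanSpace ℝ (Fin n)} (hx : x ∈ Qcube n j m) :
    seqBlocks s γ j x = (2 : ℝ≥0∞) ^ ((j : ℝ) * s x) * (‖γ j m‖₊ : ℝ≥0∞) := by
  unfold seqBlocks
  rw [tsum_eq_single m]
  · simp [hx]
  · intro m' hm'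
    have : x ∉ Qcube n j m' := fun h => hm' (by rw [mem_Qcube_iff] at h hx; rw [h, hx])
    simp [this]

theorem exists_mem_Qcube {n : ℕ} (j : ℕ) (x : EuclideanSpace ℝ (Fin n)) :
    ∃ m, x ∈ Qcube n j m := ⟨_, (mem_Qcube_iff j _ x).2 rfl⟩

theorem Qcube_eq_preimage (n : ℕ) (j : ℕ) (m : Fin n → ℤ) :
    Qcube n j m = (MeasurableEquiv.toLp 2 (Fin n → ℝ)).symm ⁻¹' (Set.univ.pi fun i =>
      Set.Ico ((2 : ℝ) ^ (-(j : ℝ)) * ((m i : ℝ) - 1 / 2))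
        ((2 : ℝ) ^ (-(j : ℝ)) * ((m i : ℝ) + 1 / 2))) := by
  ext x; simp [Qcube]

theorem measurableSet_Qcube (n : ℕ) (j : ℕ) (m : Fin n → ℤ) : MeasurableSet (Qcube n j m) := by
  rw [Qcube_eq_preimage]
  exact (MeasurableEquiv.measurable _) (MeasurableSet.univ_pi fun _ => measurableSet_Ico)

/-- The volume `2^{-jn}` of the dyadic cubes of generation `j`. -/
def cubeVol (n j : ℕ) : ℝ≥0∞ := (2 : ℝ≥0∞) ^ (-((j : ℝ) * n))

theorem volume_Qcube (n : ℕ) (j : ℕ) (m : Fin n → ℤ) : volume (Qcube n j m) = cubeVol n j := by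
  rw [Qcube_eq_preimage, (EuclideanSpace.volume_preserving_symm_measurableEquiv_toLp
    (Fin n)).measure_preimage_equiv, Real.volume_pi_Ico]
  have : ∀ i, (2 : ℝ) ^ (-(j : ℝ)) * ((m i : ℝ) + 1 / 2) -
      (2 : ℝ) ^ (-(j : ℝ)) * ((m i : ℝ) - 1 / 2) = (2 : ℝ) ^ (-(j : ℝ)) := fun i => by ring
  simp only [this, Finset.prod_const, Finset.card_univ, Fintype.card_fin, cubeVol]
  rw [← ENNReal.ofReal_rpow_of_pos (by norm_num), ← ENNReal.rpow_natCast, ← ENNReal.rpow_mul]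
  simp

theorem cubeVol_ne_zero (n j : ℕ) : cubeVol n j ≠ 0 := by simp [cubeVol, ENNReal.rpow_eq_zero_iff]

theorem cubeVol_ne_top (n j : ℕ) : cubeVol n j ≠ ∞ := by simp [cubeVol, ENNReal.rpow_eq_top_iff]

theorem cubeVol_le_one (n j : ℕ) : cubeVol n j ≤ 1 := by
  unfold cubeVol
  calc (2 : ℝ≥0∞) ^ (-((j : ℝ) * n)) ≤ 2 ^ (0 : ℝ) :=
        ENNReal.rpow_le_rpow_of_exponent_le (by norm_num) (by simp; positivity)
    _ = 1 := by simp

theorem dist_le_of_mem_Qcube {n : ℕ} (hn : 0 < n) {j : ℕ} {m : Fin n → ℤ}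
    {x y : EuclideanSpace ℝ (Fin n)} (hx : x ∈ Qcube n j m) (hy : y ∈ Qcube n j m) :
    dist x y ≤ n * (2 : ℝ) ^ (-(j : ℝ)) := by
  have h1 : (1 : ℝ) ≤ n := by exact_mod_cast hn
  have h2 : (0 : ℝ) < (2 : ℝ) ^ (-(j : ℝ)) := by positivity
  rw [EuclideanSpace.dist_eq]
  apply Real.sqrt_le_iff.2 ⟨by positivity, ?_⟩
  calc ∑ i, dist (x i) (y i) ^ 2 ≤ ∑ i : Fin n, ((2 : ℝ) ^ (-(j : ℝ))) ^ 2 := by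
        refine Finset.sum_le_sum fun i _ => ?_
        have hx' := hx i
        have hy' := hy i
        refine pow_le_pow_left₀ dist_nonneg ?_ 2
        rw [Real.dist_eq, abs_le]
        constructor <;> linarith [hx'.1, hx'.2, hy'.1, hy'.2]
    _ = n * ((2 : ℝ) ^ (-(j : ℝ))) ^ 2 := by simp
    _ ≤ _ := by
        rw [mul_pow]
        refine mul_le_mul_of_nonneg_right ?_ (by positivity)
        nlinarith

/-- On a dyadic cube of generation `j` a log-Hölder function oscillates by at most `c / j`, since
`log (e + 1/|x - y|)` is at least of order `j` there. -/
theorem LocLogHolder.osc {n : ℕ} (hn : 0 < n) {g : EuclideanSpace ℝ (Fin n) → ℝ}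
    (hg : LocLogHolder g) : ∃ c : ℝ, 0 ≤ c ∧ ∀ (j : ℕ) (m : Fin n → ℤ), ∀ x ∈ Qcube n j m,
      ∀ y ∈ Qcube n j m, j * |g x - g y| ≤ c := by
  obtain ⟨c, hc, hg⟩ := hg
  have hl2 : 0 < Real.log 2 := Real.log_pos (by norm_num)
  have h1 : (1 : ℝ) ≤ n := by exact_mod_cast hn
  have hln : 0 ≤ Real.log n := Real.log_nonneg h1
  refine ⟨c * ((1 + Real.log n) / Real.log 2), by positivity, fun j m x hx y hy => ?_⟩
  rcases eq_or_ne x y with rfl | hxy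
  · simp only [sub_self, abs_zero, mul_zero]; positivity
  have hd : 0 < dist x y := dist_pos.2 hxy
  have hd' := dist_le_of_mem_Qcube hn hx hy
  set l := Real.log (Real.exp 1 + 1 / dist x y) with hl
  have hl1 : 1 ≤ l := by
    rw [hl, Real.le_log_iff_exp_le (by positivity)]
    have : 0 < 1 / dist x y := by positivity
    linarith
  have hjl : j * Real.log 2 ≤ l + Real.log n := by
    rw [← Real.log_rpow (by norm_num), hl, ← Real.log_mul (by positivity) (by positivity)]
    apply Real.log_le_log (by positivity)
    have : (2 : ℝ) ^ (j : ℝ) ≤ 1 / dist x y * n := by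
      rw [Real.rpow_neg (by norm_num), ← div_eq_mul_inv, le_div_iff₀ (by positivity)] at hd'
      rw [one_div, inv_mul_eq_div, le_div_iff₀ hd]
      linarith
    have := Real.exp_pos 1
    nlinarith
  calc j * |g x - g y| ≤ j * (c / l) := by gcongr; exact hg x y
    _ = c * (j / l) := by ring
    _ ≤ _ := by
        refine mul_le_mul_of_nonneg_left ?_ hc.le
        rw [div_le_div_iff₀ (by linarith) hl2]
        nlinarith

/-! ### Summable levels -/

/-- The sum of the powers of `2` up to `Z` is at most twice the largest of them. -/
theorem tsum_two_pow_le (Z : ℝ≥0∞) :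
    ∑' k : ℕ, (if (2 : ℝ≥0∞) ^ k ≤ Z then (2 : ℝ≥0∞) ^ k else 0) ≤ 2 * Z := by
  refine ENNReal.tsum_le_of_sum_range_le fun N => ?_
  suffices h : ∑ k ∈ Finset.range N, (if (2 : ℝ≥0∞) ^ k ≤ Z then (2 : ℝ≥0∞) ^ k else 0) ≤ 2 * Z ∧
      ∑ k ∈ Finset.range N, (if (2 : ℝ≥0∞) ^ k ≤ Z then (2 : ℝ≥0∞) ^ k else 0) ≤ 2 ^ N from h.1
  induction N with
  | zero => simp
  | succ N ih =>
    rw [Finset.sum_range_succ]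
    split_ifs with h
    · have : ∑ k ∈ Finset.range N, (if (2 : ℝ≥0∞) ^ k ≤ Z then (2 : ℝ≥0∞) ^ k else 0) + 2 ^ N
          ≤ 2 * 2 ^ N := by rw [two_mul]; gcongr; exact ih.2
      exact ⟨this.trans (by gcongr), this.trans (by rw [pow_succ, mul_comm])⟩
    · rw [add_zero]
      exact ⟨ih.1, ih.2.trans (pow_le_pow_right₀ (by norm_num) (by simp))⟩

/-- The terms `ρ ^ j ≤ W` form a tail of the geometric series, controlled by its first term. -/
theorem tsum_geom_le (ρ W : ℝ≥0∞) :
    ∑' j : ℕ, (if ρ ^ j ≤ W then ρ ^ j else 0) ≤ (1 - ρ)⁻¹ * W := by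
  classical
  by_cases hex : ∃ j, ρ ^ j ≤ W
  · set j₀ := Nat.find hex
    have h0 : ρ ^ j₀ ≤ W := Nat.find_spec hex
    rw [← ENNReal.summable.sum_add_tsum_nat_add' (k := j₀), Finset.sum_eq_zero, zero_add]
    · calc ∑' j : ℕ, (if ρ ^ (j + j₀) ≤ W then ρ ^ (j + j₀) else 0)
          ≤ ∑' j : ℕ, ρ ^ j * ρ ^ j₀ := by
            refine ENNReal.tsum_le_tsum fun j => ?_
            rw [← pow_add]; split_ifs <;> simp
        _ = (1 - ρ)⁻¹ * ρ ^ j₀ := by rw [ENNReal.tsum_mul_right, ENNReal.tsum_geometric]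
        _ ≤ _ := by gcongr
    · intro j hj
      rw [if_neg (Nat.find_min hex (Finset.mem_range.1 hj))]
  · push Not at hex
    simp [fun j => (hex j).not_ge]

theorem exists_two_pow {b : ℝ≥0∞} (hb : 1 < b) (hb' : b ≠ ∞) :
    ∃ k : ℕ, 2 ^ k < b ∧ b ≤ 2 ^ (k + 1) := by
  classical
  have hex : ∃ k : ℕ, b ≤ 2 ^ (k + 1) := by
    lift b to ℝ≥0 using hb'
    obtain ⟨k, hk⟩ := pow_unbounded_of_one_lt b (one_lt_two)
    refine ⟨k, ?_⟩
    have : b ≤ 2 ^ (k + 1) := hk.le.trans (pow_le_pow_right₀ (by norm_num) (by simp))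
    exact_mod_cast this
  refine ⟨Nat.find hex, ?_, Nat.find_spec hex⟩
  rcases h : Nat.find hex with _ | k
  · simpa using hb
  · exact not_le.1 (Nat.find_min hex (by omega : k < Nat.find hex))

/-- The geometric ratio `2^{-nη}`, `η = ε / (1 + ε)`. -/
def ratio (n : ℕ) (ε : ℝ) : ℝ≥0∞ := (2 : ℝ≥0∞) ^ (-(n * (ε / (1 + ε))))

theorem cubeVol_rpow (n j : ℕ) (ε : ℝ) :
    cubeVol n j ^ (ε / (1 + ε)) = ratio n ε ^ j := by
  rw [cubeVol, ratio, ← ENNReal.rpow_natCast, ← ENNReal.rpow_mul, ← ENNReal.rpow_mul]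
  congr 1; ring

/-- The bound for the sum of the levels in `exists_levels`. -/
def levelBound (n : ℕ) (ε : ℝ) (K : ℝ≥0∞) : ℝ≥0∞ := (1 - ratio n ε)⁻¹ * (1 + 4 * K)

theorem levelBound_ne_top {n : ℕ} (hn : 0 < n) {ε : ℝ} (hε : 0 < ε) {K : ℝ≥0∞} (hK : K ≠ ∞) :
    levelBound n ε K ≠ ∞ := by
  have : ratio n ε < 1 := by
    have hn' : (0 : ℝ) < n := by exact_mod_cast hn
    unfold ratio
    apply ENNReal.rpow_lt_one_of_one_lt_of_neg (by norm_num)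
    have : 0 < n * (ε / (1 + ε)) := by positivity
    linarith
  unfold levelBound
  refine ENNReal.mul_ne_top ?_ (by finiteness)
  simpa [tsub_eq_zero_iff_le] using this

theorem one_le_levelBound (n : ℕ) (ε : ℝ) (K : ℝ≥0∞) : 1 ≤ levelBound n ε K := by
  unfold levelBound
  calc (1 : ℝ≥0∞) = 1 * 1 := by simp
    _ ≤ _ := by
      gcongr
      · exact ENNReal.one_le_inv.2 tsub_le_self
      · exact le_self_add

/-- The constant-exponent core of the argument. With `r = 1 + ε`, `v = 2 ^ (-jn)` and
`1 / r = 1 - η`, the levels are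
`T j = v ^ η + ∑ 2 ^ (k + 1) v ^ η w_k ^ (1 / r)`, summed over those `k` with `v ≤ w_k`, where
`w_k` is the measure of the union, over all generations `j`, of the cubes on which `b j` exceeds
`2 ^ k` somewhere. The first term takes care of the points with `b j ≤ 1`. Summing over `j` first
gives a tail of a geometric series, at most a constant times `w_k ^ η`, which leaves
`∑ 2 ^ k w_k ≤ 2 K ∫ H`. Only the cubes, never the functions `b j` and `H`, have to be
measurable. -/
theorem exists_levels {n : ℕ} {ε : ℝ} (hε : 0 < ε) {K : ℝ≥0∞}
    (b : ℕ → EuclideanSpace ℝ (Fin n) → ℝ≥0∞) (H : EuclideanSpace ℝ (Fin n) → ℝ≥0∞)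
    (hH : ∫⁻ x, H x ≤ 1) (hbH : ∀ j x, b j x ≤ H x) (hbt : ∀ j x, b j x ≠ ∞)
    (hK : ∀ j m, ∀ x ∈ Qcube n j m, ∀ y ∈ Qcube n j m, 1 < b j x → b j x ≤ K * b j y) :
    ∃ T : ℕ → ℝ≥0∞, (∀ j, T j ≠ 0) ∧ ∑' j, T j ≤ levelBound n ε K ∧
      (∀ j x, b j x * cubeVol n j ≤ T j) ∧
      ∀ j, ∫⁻ x, (cubeVol n j)⁻¹ * (b j x * cubeVol n j / T j) ^ (1 + ε) ≤ 2 := by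
  classical
  have hr : (0 : ℝ) < 1 + ε := by linarith
  set η := ε / (1 + ε) with hη
  have hη0 : 0 < η := by positivity
  have hηθ : η + (1 + ε)⁻¹ = 1 := by rw [hη]; field_simp; ring
  have hηr : η * (1 + ε) = ε := by rw [hη]; field_simp
  have hθr : (1 + ε)⁻¹ * (1 + ε) = 1 := by field_simp
  -- the union of the cubes of generation `j` on which `b j` exceeds `2 ^ k` somewhere
  let E : ℕ → ℕ → Set (EuclideanSpace ℝ (Fin n)) := fun j k =>
    ⋃ (m : Fin n → ℤ) (_ : ∃ x ∈ Qcube n j m, 2 ^ k < b j x), Qcube n j m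
  have hEm : ∀ j k, MeasurableSet (E j k) := fun j k =>
    MeasurableSet.iUnion fun m => MeasurableSet.iUnion fun _ => measurableSet_Qcube n j m
  have hEmem : ∀ j k x, 2 ^ k < b j x → x ∈ E j k := fun j k x hx => by
    obtain ⟨m, hm⟩ := exists_mem_Qcube j x
    exact Set.mem_iUnion₂.2 ⟨m, ⟨x, hm, hx⟩, hm⟩
  have hEH : ∀ j k, ∀ x ∈ E j k, 2 ^ k ≤ K * H x := fun j k x hx => by
    obtain ⟨m, ⟨y, hy, hyb⟩, hxm⟩ := Set.mem_iUnion₂.1 hx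
    have h1 : 1 < b j y := lt_of_le_of_lt (one_le_pow₀ (by norm_num)) hyb
    exact hyb.le.trans ((hK j m y hy x hxm h1).trans (by gcongr; exact hbH j x))
  let w : ℕ → ℝ≥0∞ := fun k => volume (⋃ j, E j k)
  have hEw : ∀ j k, volume (E j k) ≤ w k := fun j k =>
    measure_mono (Set.subset_iUnion (fun j => E j k) j)
  have hEv : ∀ j k, (E j k).Nonempty → cubeVol n j ≤ w k := fun j k ⟨x, hx⟩ => by
    obtain ⟨m, hm, hxm⟩ := Set.mem_iUnion₂.1 hx
    rw [← volume_Qcube n j m]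
    exact (measure_mono (Set.subset_iUnion₂_of_subset m hm subset_rfl)).trans (hEw j k)
  have hw : ∑' k, 2 ^ k * w k ≤ 2 * K := by
    calc ∑' k, 2 ^ k * w k
        = ∑' k, ∫⁻ x, (⋃ j, E j k).indicator (fun _ => (2 : ℝ≥0∞) ^ k) x := by
          refine tsum_congr fun k => ?_
          rw [lintegral_indicator_const (MeasurableSet.iUnion fun j => hEm j k)]
      _ = ∫⁻ x, ∑' k, (⋃ j, E j k).indicator (fun _ => (2 : ℝ≥0∞) ^ k) x := by
          rw [lintegral_tsum]
          exact fun k => (measurable_const.indicator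
            (MeasurableSet.iUnion fun j => hEm j k)).aemeasurable
      _ ≤ ∫⁻ x, 2 * K * H x := by
          refine lintegral_mono fun x => ?_
          rw [mul_assoc]
          refine le_trans (ENNReal.tsum_le_tsum fun k => ?_) (tsum_two_pow_le (K * H x))
          by_cases hx : x ∈ ⋃ j, E j k
          · obtain ⟨j, hj⟩ := Set.mem_iUnion.1 hx
            rw [Set.indicator_of_mem hx, if_pos (hEH j k x hj)]
          · rw [Set.indicator_of_notMem hx]; exact zero_le
      _ ≤ 2 * K := by
          by_cases hKt : K = ∞
          · subst hKt; simp
          rw [lintegral_const_mul' _ _ (by finiteness)]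
          calc 2 * K * ∫⁻ x, H x ≤ 2 * K * 1 := by gcongr
            _ = _ := mul_one _
  let t : ℕ → ℕ → ℝ≥0∞ := fun j k =>
    if cubeVol n j ≤ w k then 2 ^ (k + 1) * cubeVol n j ^ η * w k ^ (1 + ε)⁻¹ else 0
  have ht : ∑' j, ∑' k, t j k ≤ (1 - ratio n ε)⁻¹ * (4 * K) := by
    rw [ENNReal.tsum_comm]
    calc ∑' k, ∑' j, t j k ≤ ∑' k, (1 - ratio n ε)⁻¹ * 2 * (2 ^ k * w k) := by
          refine ENNReal.tsum_le_tsum fun k => ?_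
          calc ∑' j, t j k ≤ ∑' j, (2 ^ (k + 1) * w k ^ (1 + ε)⁻¹) *
                (if ratio n ε ^ j ≤ w k ^ η then ratio n ε ^ j else 0) := by
                refine ENNReal.tsum_le_tsum fun j => ?_
                by_cases h : cubeVol n j ≤ w k
                · have h' : ratio n ε ^ j ≤ w k ^ η := by
                    rw [← cubeVol_rpow]; exact ENNReal.rpow_le_rpow h hη0.le
                  simp only [t, if_pos h, if_pos h']
                  rw [← cubeVol_rpow, mul_right_comm]
                · simp [t, if_neg h]
            _ ≤ (2 ^ (k + 1) * w k ^ (1 + ε)⁻¹) * ((1 - ratio n ε)⁻¹ * w k ^ η) := by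
                rw [ENNReal.tsum_mul_left]; gcongr; exact tsum_geom_le _ _
            _ = (1 - ratio n ε)⁻¹ * 2 * (2 ^ k * (w k ^ η * w k ^ (1 + ε)⁻¹)) := by
                rw [pow_succ]; ring
            _ = _ := by
                rw [← ENNReal.rpow_add_of_nonneg _ _ hη0.le (by positivity), hηθ,
                  ENNReal.rpow_one]
      _ ≤ (1 - ratio n ε)⁻¹ * 2 * (2 * K) := by rw [ENNReal.tsum_mul_left]; gcongr
      _ = _ := by ring
  have hv0 := cubeVol_ne_zero n
  have hvt := cubeVol_ne_top n
  let T : ℕ → ℝ≥0∞ := fun j => cubeVol n j ^ η + ∑' k, t j k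
  have hT0 : ∀ j, T j ≠ 0 := fun j => by
    have : cubeVol n j ^ η ≠ 0 := by simp [ENNReal.rpow_eq_zero_iff, hv0, hvt]
    simp [T, this]
  have hTs : ∑' j, T j ≤ levelBound n ε K := by
    simp only [T]
    rw [ENNReal.tsum_add, levelBound, mul_add, mul_one]
    gcongr
    simp only [hη, cubeVol_rpow, ENNReal.tsum_geometric, le_refl]
  have htT : ∀ j k, t j k ≤ T j := fun j k =>
    (ENNReal.le_tsum (f := fun k => t j k) k).trans le_add_self
  have hvT : ∀ j, cubeVol n j ^ η ≤ T j := fun j => le_self_add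
  refine ⟨T, hT0, hTs, fun j x => ?_, fun j => ?_⟩
  · rcases le_or_gt (b j x) 1 with hb | hb
    · calc b j x * cubeVol n j ≤ 1 * cubeVol n j ^ (1 : ℝ) := by rw [ENNReal.rpow_one]; gcongr
        _ ≤ cubeVol n j ^ η := by
            rw [one_mul]
            exact ENNReal.rpow_le_rpow_of_exponent_ge (cubeVol_le_one n j)
              (by have : 0 < (1 + ε)⁻¹ := by positivity
                  linarith)
        _ ≤ T j := hvT j
    · obtain ⟨k, hk, hk'⟩ := exists_two_pow hb (hbt j x)
      have hvw := hEv j k ⟨x, hEmem j k x hk⟩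
      refine le_trans ?_ (htT j k)
      simp only [t, if_pos hvw, mul_assoc]
      gcongr
      calc cubeVol n j = cubeVol n j ^ η * cubeVol n j ^ (1 + ε)⁻¹ := by
            rw [← ENNReal.rpow_add_of_nonneg _ _ hη0.le (by positivity), hηθ, ENNReal.rpow_one]
        _ ≤ _ := by gcongr
  · -- the value of the integrand at level `c`, used below for `c = b j x` and `c = 2 ^ (k + 1)`
    let φ : ℝ≥0∞ → ℝ≥0∞ := fun c => (cubeVol n j)⁻¹ * (c * cubeVol n j / T j) ^ (1 + ε)
    have hφ : ∀ c, φ c = (c * cubeVol n j ^ η / T j) ^ (1 + ε) := fun c => by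
      simp only [φ, div_eq_mul_inv]
      simp only [ENNReal.mul_rpow_of_nonneg _ _ hr.le]
      rw [← ENNReal.rpow_mul, hηr, ENNReal.rpow_add _ _ (hv0 j) (hvt j), ENNReal.rpow_one]
      calc _ = c ^ (1 + ε) * cubeVol n j ^ ε * (T j)⁻¹ ^ (1 + ε) *
            ((cubeVol n j)⁻¹ * cubeVol n j) := by ring
        _ = _ := by rw [ENNReal.inv_mul_cancel (hv0 j) (hvt j), mul_one]
    have hφm : Monotone φ := fun c c' h => by simp only [φ]; gcongr
    have hpt : ∀ x, φ (b j x) ≤ H x + ∑' k, (E j k).indicator (fun _ => φ (2 ^ (k + 1))) x := by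
      intro x
      rcases le_or_gt (b j x) 1 with hb | hb
      · refine le_trans ?_ le_self_add
        rw [hφ]
        calc (b j x * cubeVol n j ^ η / T j) ^ (1 + ε) ≤ (b j x) ^ (1 + ε) := by
              gcongr
              exact ENNReal.div_le_of_le_mul (by gcongr; exact hvT j)
          _ ≤ (b j x) ^ (1 : ℝ) := ENNReal.rpow_le_rpow_of_exponent_ge hb (by linarith)
          _ ≤ H x := by rw [ENNReal.rpow_one]; exact hbH j x
      · obtain ⟨k, hk, hk'⟩ := exists_two_pow hb (hbt j x)
        refine le_trans ?_ le_add_self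
        refine le_trans ?_ (ENNReal.le_tsum k)
        rw [Set.indicator_of_mem (hEmem j k x hk)]
        exact hφm hk'
    calc ∫⁻ x, φ (b j x)
        ≤ ∫⁻ x, (H x + ∑' k, (E j k).indicator (fun _ => φ (2 ^ (k + 1))) x) := lintegral_mono hpt
      _ = (∫⁻ x, H x) + ∑' k, φ (2 ^ (k + 1)) * volume (E j k) := by
          have hm : ∀ k, Measurable ((E j k).indicator (fun _ => φ (2 ^ (k + 1)))) := fun k =>
            measurable_const.indicator (hEm j k)
          rw [lintegral_add_right _ (Measurable.tsum hm),
            lintegral_tsum fun k => (hm k).aemeasurable]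
          congr 1
          exact tsum_congr fun k => lintegral_indicator_const (hEm j k) _
      _ ≤ 1 + ∑' k, t j k / T j := by
          gcongr with k
          rcases (E j k).eq_empty_or_nonempty with he | he
          · simp [he]
          have hvw := hEv j k he
          have h1 : t j k / T j ≤ 1 := ENNReal.div_le_of_le_mul (by simpa using htT j k)
          calc φ (2 ^ (k + 1)) * volume (E j k) ≤ φ (2 ^ (k + 1)) * w k := by
                gcongr; exact hEw j k
            _ = (t j k / T j) ^ (1 + ε) := by
                rw [hφ]
                simp only [t, if_pos hvw, div_eq_mul_inv]
                simp only [ENNReal.mul_rpow_of_nonneg _ _ hr.le]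
                rw [← ENNReal.rpow_mul (w k), hθr, ENNReal.rpow_one]
                ring
            _ ≤ (t j k / T j) ^ (1 : ℝ) := ENNReal.rpow_le_rpow_of_exponent_ge h1 (by linarith)
            _ = _ := ENNReal.rpow_one _
      _ ≤ 1 + 1 := by
          gcongr
          simp only [div_eq_mul_inv]
          rw [ENNReal.tsum_mul_right, ← div_eq_mul_inv]
          exact ENNReal.div_le_of_le_mul (by rw [one_mul]; exact le_add_self)
      _ = 2 := by norm_num

/-! ### Comparability on cubes and the pointwise estimate -/

/-- If `b j = (2 ^ (j s) d) ^ p` exceeds `1` at a point of a dyadic cube of generation `j`, then its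
value there is at most a constant times its value at any other point of the cube. Log-Hölder
continuity absorbs the oscillation of `s` and `p` as soon as `2 ^ (j s) d` lies between `1` and `2
^ O(j)`; the upper bound follows from `∫ H ≤ 1`, because the cube has volume `2 ^ (-jn)`. -/
theorem cube_comparable {n : ℕ} {p s : EuclideanSpace ℝ (Fin n) → ℝ} {pm pM cs cp : ℝ}
    (hpm : 0 < pm) (hp : ∀ x, pm ≤ p x) (hpM : ∀ x, p x ≤ pM) (hcs : 0 ≤ cs)
    {j : ℕ} {m : Fin n → ℤ}
    (hs : ∀ x ∈ Qcube n j m, ∀ y ∈ Qcube n j m, j * |s x - s y| ≤ cs)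
    (hip : ∀ x ∈ Qcube n j m, ∀ y ∈ Qcube n j m, j * |(p x)⁻¹ - (p y)⁻¹| ≤ cp)
    {d : ℝ≥0∞} (hd : d ≠ ∞) {H : EuclideanSpace ℝ (Fin n) → ℝ≥0∞} (hH : ∫⁻ x, H x ≤ 1)
    (hbH : ∀ x ∈ Qcube n j m, ((2 : ℝ≥0∞) ^ ((j : ℝ) * s x) * d) ^ p x ≤ H x)
    {x y : EuclideanSpace ℝ (Fin n)} (hx : x ∈ Qcube n j m) (hy : y ∈ Qcube n j m)
    (h1 : 1 < ((2 : ℝ≥0∞) ^ ((j : ℝ) * s x) * d) ^ p x) :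
    ((2 : ℝ≥0∞) ^ ((j : ℝ) * s x) * d) ^ p x ≤
      (2 : ℝ≥0∞) ^ (2 * pM * cs + pM ^ 2 * cp * n / pm) *
        ((2 : ℝ≥0∞) ^ ((j : ℝ) * s y) * d) ^ p y := by
  have hp0 : ∀ x, 0 < p x := fun x => hpm.trans_le (hp x)
  have hd0 : d ≠ 0 := by
    rintro rfl
    rw [mul_zero, ENNReal.zero_rpow_of_pos (hp0 x)] at h1
    exact absurd h1 (by simp)
  -- writing the coefficient as a power of `2` turns all estimates into ones for exponents
  obtain ⟨δ, rfl⟩ : ∃ δ : ℝ, d = (2 : ℝ≥0∞) ^ δ := by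
    refine ⟨Real.logb 2 d.toReal, ?_⟩
    have hpos : 0 < d.toReal := ENNReal.toReal_pos hd0 hd
    have : (2 : ℝ≥0∞) = ENNReal.ofReal 2 := by simp
    rw [this, ENNReal.ofReal_rpow_of_pos (by norm_num),
      Real.rpow_logb (by norm_num) (by norm_num) hpos, ENNReal.ofReal_toReal hd]
  have h2 : (2 : ℝ≥0∞) ≠ 0 := by norm_num
  have h2t : (2 : ℝ≥0∞) ≠ ∞ := by norm_num
  have hmono : ∀ {a b : ℝ}, a ≤ b → (2 : ℝ≥0∞) ^ a ≤ 2 ^ b := fun h =>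
    ENNReal.rpow_le_rpow_of_exponent_le (by norm_num) h
  have hlt : ∀ {a b : ℝ}, a < b → (2 : ℝ≥0∞) ^ a < 2 ^ b := fun h =>
    ENNReal.rpow_lt_rpow_of_exponent_lt (by norm_num) h2t h
  simp only [← ENNReal.rpow_add _ _ h2 h2t, ← ENNReal.rpow_mul] at h1 hbH ⊢
  set l := j * s x + δ with hl
  have hl0 : 0 < l := by
    by_contra! h
    have := hmono (mul_nonpos_of_nonpos_of_nonneg h (hp0 x).le)
    rw [ENNReal.rpow_zero] at this
    exact absurd h1 this.not_gt
  have hls : ∀ z ∈ Qcube n j m, l - cs ≤ j * s z + δ := fun z hz => by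
    have h3 := hs x hx z hz
    have h4 : j * (s x - s z) ≤ j * |s x - s z| := by gcongr; exact le_abs_self _
    rw [hl]; linarith
  -- the modular bound on the cube limits the size of the coefficient to `2 ^ O(j)`
  have hup : l ≤ cs + j * n / pm := by
    rcases le_or_gt l cs with h | h
    · have : 0 ≤ j * n / pm := by positivity
      linarith
    by_contra! hcon
    have h5 : (2 : ℝ≥0∞) ^ ((l - cs) * pm) * cubeVol n j ≤ 1 := by
      calc (2 : ℝ≥0∞) ^ ((l - cs) * pm) * cubeVol n j
          = ∫⁻ _ in Qcube n j m, (2 : ℝ≥0∞) ^ ((l - cs) * pm) := by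
            rw [setLIntegral_const, volume_Qcube]
        _ ≤ ∫⁻ z in Qcube n j m, H z := by
            refine setLIntegral_mono' (measurableSet_Qcube n j m) fun z hz => ?_
            refine le_trans (hmono ?_) (hbH z hz)
            have := hls z hz
            have := hp z
            nlinarith
        _ ≤ ∫⁻ z, H z := setLIntegral_le_lintegral _ _
        _ ≤ 1 := hH
    rw [cubeVol, ← ENNReal.rpow_add _ _ h2 h2t] at h5
    have h6 : j * n < (l - cs) * pm := by
      rw [← div_lt_iff₀ hpm]; linarith
    have h7 := hlt (show (0 : ℝ) < (l - cs) * pm + -(j * n) by linarith)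
    rw [ENNReal.rpow_zero] at h7
    exact absurd h5 h7.not_ge
  apply hmono
  have hpx := hp0 x
  have hpy := hp0 y
  have hpM0 : 0 < pM := hpx.trans_le (hpM x)
  have hdp : p x - p y ≤ p x * p y * |(p x)⁻¹ - (p y)⁻¹| := by
    have h8 : p x - p y = p x * p y * ((p y)⁻¹ - (p x)⁻¹) := by field_simp
    rw [h8, abs_sub_comm]
    gcongr
    exact le_abs_self _
  have hpp : p x * p y ≤ pM ^ 2 := by
    rw [sq]; exact mul_le_mul (hpM x) (hpM y) hpy.le hpM0.le
  have hjp : (p x - p y) * j ≤ pM ^ 2 * cp := by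
    have h9 := hip x hx y hy
    calc (p x - p y) * j ≤ (p x * p y * |(p x)⁻¹ - (p y)⁻¹|) * j := by gcongr
      _ = p x * p y * (j * |(p x)⁻¹ - (p y)⁻¹|) := by ring
      _ ≤ pM ^ 2 * cp := by gcongr
  have hcp : 0 ≤ cp := by
    have := hip x hx x hx; simpa using this
  have hA : (p x - p y) * l ≤ pM * cs + pM ^ 2 * cp * n / pm := by
    rcases le_or_gt (p x) (p y) with h | h
    · have : 0 ≤ pM * cs + pM ^ 2 * cp * n / pm := by positivity
      nlinarith
    · calc (p x - p y) * l ≤ (p x - p y) * (cs + j * n / pm) := by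
            gcongr
        _ = (p x - p y) * cs + (p x - p y) * j * n / pm := by ring
        _ ≤ _ := by
            gcongr
            linarith [hpM x]
  have hB : (l - cs) * p y ≤ (j * s y + δ) * p y := by
    gcongr; exact hls y hy
  have hC : cs * p y ≤ cs * pM := by gcongr; exact hpM y
  linarith

/-- The block of smoothness `σ₁`, in terms of `b = (2 ^ (j σ₀) c / lam) ^ p` and the exponent
`t = 1 / p₁`. This is where the condition `s₀ - n / p₀ = s₁ - n / p₁` enters. -/
theorem pointwise_bound {n j : ℕ} {p t pm σ₀ σ₁ : ℝ} (hpm : 0 < pm) (hp : pm ≤ p)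
    (hσ : σ₁ = σ₀ - n * p⁻¹ + n * t) {L B c lam T : ℝ≥0∞} (hL1 : 1 ≤ L)
    (hLt : L ≠ ∞)     (hB1 : 1 ≤ B) (hBt : B ≠ ∞) :
    (2 : ℝ≥0∞) ^ ((j : ℝ) * σ₁) * c / ((L * B) ^ pm⁻¹ * lam) / (T / B) ^ p⁻¹ ≤
      (((2 : ℝ≥0∞) ^ ((j : ℝ) * σ₀) * (c / lam)) ^ p * cubeVol n j / T / L) ^ p⁻¹ *
        cubeVol n j ^ (-t) := by
  have hp0 : 0 < p := hpm.trans_le hp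
  have hip : 0 ≤ p⁻¹ := by positivity
  have h2 : (2 : ℝ≥0∞) ≠ 0 := by norm_num
  have h2t : (2 : ℝ≥0∞) ≠ ∞ := by norm_num
  have hB0 : B ≠ 0 := fun h => by simp [h] at hB1
  have hL0 : L ≠ 0 := fun h => by simp [h] at hL1
  have hLT : (L * T) ^ p⁻¹ ≤ (L * B) ^ pm⁻¹ * (T / B) ^ p⁻¹ := by
    have : L * T = (L * B) * (T / B) := by
      rw [mul_assoc, ENNReal.mul_div_cancel hB0 hBt]
    rw [this, ENNReal.mul_rpow_of_nonneg _ _ hip]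
    gcongr
    exact one_le_mul hL1 hB1
  have hv : (2 : ℝ≥0∞) ^ ((j : ℝ) * σ₁) =
      (2 : ℝ≥0∞) ^ ((j : ℝ) * σ₀) * (cubeVol n j ^ p⁻¹ * cubeVol n j ^ (-t)) := by
    rw [cubeVol, ← ENNReal.rpow_mul, ← ENNReal.rpow_mul, ← ENNReal.rpow_add _ _ h2 h2t,
      ← ENNReal.rpow_add _ _ h2 h2t, hσ]
    congr 1; ring
  have hR : (((2 : ℝ≥0∞) ^ ((j : ℝ) * σ₀) * (c / lam)) ^ p * cubeVol n j / T / L) ^ p⁻¹ =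
      (2 : ℝ≥0∞) ^ ((j : ℝ) * σ₀) * (c / lam) * cubeVol n j ^ p⁻¹ / (L * T) ^ p⁻¹ := by
    have hLT' : (L * T)⁻¹ = T⁻¹ * L⁻¹ := by
      rw [mul_comm, ENNReal.mul_inv (Or.inr hLt) (Or.inr hL0)]
    rw [div_eq_mul_inv _ T, div_eq_mul_inv _ L, mul_assoc _ T⁻¹, ← hLT',
      ENNReal.mul_rpow_of_nonneg _ _ hip, ENNReal.mul_rpow_of_nonneg _ _ hip,
      ← ENNReal.rpow_mul, mul_inv_cancel₀ hp0.ne', ENNReal.rpow_one, ENNReal.inv_rpow,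
      ← div_eq_mul_inv]
  have hX0 : (L * B) ^ pm⁻¹ ≠ 0 := by
    simp [ENNReal.rpow_eq_zero_iff, hL0, hB0, ENNReal.mul_eq_top, hLt, hBt]
  have hXt : (L * B) ^ pm⁻¹ ≠ ∞ :=
    ENNReal.rpow_ne_top_of_nonneg (by positivity) (ENNReal.mul_ne_top hLt hBt)
  rw [hR, hv]
  simp only [div_eq_mul_inv] at hLT ⊢
  have hLT' := ENNReal.inv_le_inv.2 hLT
  rw [ENNReal.mul_inv (Or.inl hX0) (Or.inl hXt)] at hLT'
  rw [ENNReal.mul_inv (Or.inl hX0) (Or.inl hXt)]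
  calc _ = (2 : ℝ≥0∞) ^ ((j : ℝ) * σ₀) * (c * lam⁻¹) * cubeVol n j ^ p⁻¹ * cubeVol n j ^ (-t) *
        (((L * B) ^ pm⁻¹)⁻¹ * ((T * B⁻¹) ^ p⁻¹)⁻¹) := by ring
    _ ≤ (2 : ℝ≥0∞) ^ ((j : ℝ) * σ₀) * (c * lam⁻¹) * cubeVol n j ^ p⁻¹ * cubeVol n j ^ (-t) *
        ((L * T) ^ p⁻¹)⁻¹ := by gcongr
    _ = _ := by ring

/-! ### The embedding -/

/-- **Jawerth embedding for sequence spaces with all exponents variable.**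
If `p₀, p₁, q ∈ P^{log}` with `sup p₀ < ∞`, `s₀, s₁` are locally log-Hölder continuous,
`inf (s₀ − s₁) > 0` and `s₀(x) − n/p₀(x) = s₁(x) − n/p₁(x)` for all `x`, then
`f^{s₀(·)}_{p₀(·),q(·)}(ℝⁿ) ↪ b^{s₁(·)}_{p₁(·),p₀(·)}(ℝⁿ)`. -/
theorem jawerth_embedding_variable_exponents (n : ℕ) (hn : 0 < n)
    (p₀ p₁ q : EuclideanSpace ℝ (Fin n) → ℝ≥0∞)
    (s₀ s₁ : EuclideanSpace ℝ (Fin n) → ℝ)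
    (hp₀ : PLog p₀) (hp₁ : PLog p₁) (hq : PLog q)
    (hp₀top : ∃ b : ℝ≥0, ∀ x, p₀ x ≤ (b : ℝ≥0∞))
    (hs₀ : LocLogHolder s₀) (hs₁ : LocLogHolder s₁)
    (hs : ∃ δ : ℝ, 0 < δ ∧ ∀ x, δ ≤ s₀ x - s₁ x)
    (hsobolev : ∀ x, s₀ x - n * ((p₀ x)⁻¹).toReal = s₁ x - n * ((p₁ x)⁻¹).toReal) :
    ∃ C : ℝ≥0, 0 < C ∧ ∀ γ : ℕ → (Fin n → ℤ) → ℂ,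
      bVarNorm n s₁ p₁ p₀ γ ≤ C * fVarNorm n s₀ p₀ q γ := by
  obtain ⟨hp₀m, ⟨c₀, hc₀, hc₀le⟩, hip, -⟩ := hp₀
  obtain ⟨hp₁m, ⟨c₁, hc₁, hc₁le⟩, -⟩ := hp₁
  obtain ⟨-, ⟨c₂, hc₂, hc₂le⟩, -⟩ := hq
  obtain ⟨b₀, hb₀⟩ := hp₀top
  obtain ⟨δ, hδ, hs⟩ := hs
  obtain ⟨cp, hcp, hip⟩ := hip.osc hn
  obtain ⟨cs, hcs, hs₀⟩ := hs₀.osc hn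
  set p : EuclideanSpace ℝ (Fin n) → ℝ := fun x => (p₀ x).toReal with hpdef
  have hp₀t : ∀ x, p₀ x ≠ ∞ := fun x => ne_top_of_le_ne_top ENNReal.coe_ne_top (hb₀ x)
  have hpm : (0 : ℝ) < c₀ := by exact_mod_cast hc₀
  have hpc : ∀ x, (c₀ : ℝ) ≤ p x := fun x => by
    simpa using ENNReal.toReal_mono (hp₀t x) (hc₀le x)
  have hpb : ∀ x, p x ≤ b₀ := fun x => by
    simpa using ENNReal.toReal_mono ENNReal.coe_ne_top (hb₀ x)
  have hp0 : ∀ x, 0 < p x := fun x => hpm.trans_le (hpc x)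
  have hpinv : ∀ x, ((p₀ x)⁻¹).toReal = (p x)⁻¹ := fun x => ENNReal.toReal_inv _
  simp only [hpinv] at hip hsobolev
  have hn' : (0 : ℝ) < n := by exact_mod_cast hn
  set ε : ℝ := c₀ * δ / n with hε
  have hε0 : 0 < ε := by positivity
  -- `p₀ / p₁` stays below `1 - ε ≤ 1 / (1 + ε)`
  have hpt : ∀ x, p x * ((p₁ x)⁻¹).toReal * (1 + ε) ≤ 1 := fun x => by
    have h1 := hs x
    have h2 := hsobolev x
    have h3 : n * ((p₁ x)⁻¹).toReal ≤ n * (p x)⁻¹ - δ := by linarith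
    have h4 : p x * (n * ((p₁ x)⁻¹).toReal) ≤ p x * (n * (p x)⁻¹ - δ) := by
      have := hp0 x
      gcongr
    have h5 : p x * (n * (p x)⁻¹ - δ) ≤ n * (1 - ε) := by
      have h6 : p x * (n * (p x)⁻¹ - δ) = n - p x * δ := by
        have := (hp0 x).ne'
        field_simp
      have h7 : n * (1 - ε) = n - c₀ * δ := by rw [hε]; field_simp
      rw [h6, h7]
      have := hpc x
      gcongr
    have h8 : p x * ((p₁ x)⁻¹).toReal ≤ 1 - ε := by
      have : n * (p x * ((p₁ x)⁻¹).toReal) ≤ n * (1 - ε) := by linarith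
      exact le_of_mul_le_mul_left this hn'
    nlinarith
  set K : ℝ≥0∞ := (2 : ℝ≥0∞) ^ (2 * (b₀ : ℝ) * cs + (b₀ : ℝ) ^ 2 * cp * n / c₀) with hKdef
  have hKt : K ≠ ∞ := by simp [hKdef, ENNReal.rpow_eq_top_iff]
  -- `B` bounds the sum of the levels; `L` makes both parts of the modular at most `1 / 2`
  set B : ℝ≥0∞ := levelBound n ε K with hB
  have hBt : B ≠ ∞ := levelBound_ne_top hn hε0 hKt
  have hB1 : 1 ≤ B := one_le_levelBound n ε K
  have hB0 : B ≠ 0 := fun h => by simp [h] at hB1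
  set L : ℝ≥0∞ := (2 : ℝ≥0∞) ^ ((b₀ : ℝ) + 2) with hL
  have hL4 : 4 ≤ L := by
    calc (4 : ℝ≥0∞) = 2 ^ (2 : ℝ) := by norm_num
      _ ≤ L := ENNReal.rpow_le_rpow_of_exponent_le (by norm_num) (by simp)
  have hL1 : 1 ≤ L := le_trans (by norm_num) hL4
  have hLt : L ≠ ∞ := by simp [hL, ENNReal.rpow_eq_top_iff]
  have hL0 : L ≠ 0 := fun h => by simp [h] at hL1
  set M : ℝ≥0∞ := (L * B) ^ (c₀ : ℝ)⁻¹ with hM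
  have hM0 : M ≠ 0 := by
    simp [hM, ENNReal.rpow_eq_zero_iff, hL0, hB0, ENNReal.mul_eq_top, hLt, hBt]
  have hMt : M ≠ ∞ := ENNReal.rpow_ne_top_of_nonneg (by positivity) (ENNReal.mul_ne_top hLt hBt)
  refine ⟨M.toNNReal, ENNReal.toNNReal_pos hM0 hMt, fun γ => ?_⟩
  rw [ENNReal.coe_toNNReal hMt]
  suffices h : ∀ lam : ℝ≥0∞, 0 < lam → varModular p₀ (fun x =>
      (if q x = ∞ then ⨆ ν, seqBlocks s₀ γ ν x
        else (∑' ν : ℕ, seqBlocks s₀ γ ν x ^ (q x).toReal) ^ ((q x).toReal)⁻¹) / lam) ≤ 1 →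
      bVarNorm n s₁ p₁ p₀ γ ≤ M * lam by
    rw [mul_comm]
    rw [← ENNReal.div_le_iff hM0 hMt]
    refine le_sInf fun lam ⟨h0, h1⟩ => ?_
    rw [ENNReal.div_le_iff hM0 hMt, mul_comm]
    exact h lam h0 h1
  intro lam hlam hmod
  set F : EuclideanSpace ℝ (Fin n) → ℝ≥0∞ := fun x =>
    (if q x = ∞ then ⨆ ν, seqBlocks s₀ γ ν x
      else (∑' ν : ℕ, seqBlocks s₀ γ ν x ^ (q x).toReal) ^ ((q x).toReal)⁻¹) with hF
  -- the `ℓ_q` norm dominates the supremum, which is all that is used of `q`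
  have hblF : ∀ j x, seqBlocks s₀ γ j x ≤ F x := fun j x => by
    simp only [hF]
    split_ifs with h
    · exact le_iSup (fun ν => seqBlocks s₀ γ ν x) j
    · have hq0 : 0 < (q x).toReal := by
        refine ENNReal.toReal_pos (fun h0 => ?_) h
        have := hc₂le x
        rw [h0] at this
        simp at this
        exact hc₂.ne' this
      rw [ENNReal.le_rpow_inv_iff hq0]
      exact ENNReal.le_tsum j
  set H : EuclideanSpace ℝ (Fin n) → ℝ≥0∞ := fun x => (F x / lam) ^ p x with hH
  have hHint : ∫⁻ x, H x ≤ 1 := by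
    have h1 : {x | p₀ x ≠ ∞} = Set.univ := Set.eq_univ_of_forall hp₀t
    have h2 : ∫⁻ x in {x | p₀ x ≠ ∞}, H x ≤ 1 := le_trans le_self_add hmod
    rwa [h1, Measure.restrict_univ] at h2
  let b : ℕ → EuclideanSpace ℝ (Fin n) → ℝ≥0∞ := fun j x => (seqBlocks s₀ γ j x / lam) ^ p x
  have hbH : ∀ j x, b j x ≤ H x := fun j x =>
    ENNReal.rpow_le_rpow (ENNReal.div_le_div_right (hblF j x) _) (hp0 x).le
  have hbeq : ∀ j m, ∀ x ∈ Qcube n j m,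
      b j x = ((2 : ℝ≥0∞) ^ ((j : ℝ) * s₀ x) * ((‖γ j m‖₊ : ℝ≥0∞) / lam)) ^ p x :=
    fun j m x hx => by simp only [b]; rw [seqBlocks_eq s₀ γ hx, mul_div_assoc]
  have hdt : ∀ j m, (‖γ j m‖₊ : ℝ≥0∞) / lam ≠ ∞ := fun j m =>
    ENNReal.div_ne_top ENNReal.coe_ne_top hlam.ne'
  have hbt : ∀ j x, b j x ≠ ∞ := fun j x => by
    obtain ⟨m, hm⟩ := exists_mem_Qcube j x
    rw [hbeq j m x hm]
    refine ENNReal.rpow_ne_top_of_nonneg (hp0 x).le (ENNReal.mul_ne_top ?_ (hdt j m))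
    simp [ENNReal.rpow_eq_top_iff]
  have hK : ∀ j m, ∀ x ∈ Qcube n j m, ∀ y ∈ Qcube n j m, 1 < b j x → b j x ≤ K * b j y := by
    intro j m x hx y hy h1
    rw [hbeq j m x hx] at h1 ⊢
    rw [hbeq j m y hy]
    exact cube_comparable hpm hpc hpb hcs (hs₀ j m) (hip j m) (hdt j m) hHint
      (fun z hz => hbeq j m z hz ▸ hbH j z) hx hy h1
  obtain ⟨T, hT0, hTs, hTb, hTint⟩ := exists_levels hε0 b H hHint hbH hbt hK
  refine sInf_le ⟨pos_iff_ne_zero.2 (mul_ne_zero hM0 hlam.ne'), ?_⟩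
  calc mixedModular p₀ p₁ (fun ν x => seqBlocks s₁ γ ν x / (M * lam)) ≤ ∑' j, T j / B := by
        refine ENNReal.tsum_le_tsum fun j => sInf_le ⟨?_, ?_⟩
        · exact ENNReal.div_pos (hT0 j) hBt
        simp only [hpinv]
        -- `u ≤ 1 / L ≤ 1` allows the variable power `p₁ / p₀` of `u` to be replaced by `1 + ε`
        let u : EuclideanSpace ℝ (Fin n) → ℝ≥0∞ := fun x => b j x * cubeVol n j / T j / L
        have huL : ∀ x, u x ≤ L⁻¹ := fun x => by
          simp only [u]
          rw [div_eq_mul_inv _ L]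
          calc _ ≤ 1 * L⁻¹ := by
                gcongr
                exact ENNReal.div_le_of_le_mul (by rw [one_mul]; exact hTb j x)
            _ = _ := one_mul _
        have hu1 : ∀ x, u x ≤ 1 := fun x => (huL x).trans (ENNReal.inv_le_one.2 hL1)
        have hg : ∀ x, seqBlocks s₁ γ j x / (M * lam) / (T j / B) ^ (p x)⁻¹ ≤
            u x ^ (p x)⁻¹ * cubeVol n j ^ (-((p₁ x)⁻¹).toReal) := fun x => by
          obtain ⟨m, hm⟩ := exists_mem_Qcube j x
          simp only [u]
          rw [seqBlocks_eq s₁ γ hm, hbeq j m x hm]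
          exact pointwise_bound hpm (hpc x) (by linarith [hsobolev x]) hL1 hLt hB1 hBt
        have hpow : ∀ x, p₁ x ≠ ∞ →
            (seqBlocks s₁ γ j x / (M * lam) / (T j / B) ^ (p x)⁻¹) ^ (p₁ x).toReal ≤
            L⁻¹ * ((cubeVol n j)⁻¹ * (b j x * cubeVol n j / T j) ^ (1 + ε)) := fun x hx => by
          have hp₁0 : p₁ x ≠ 0 := fun h0 => by
            have := hc₁le x
            rw [h0] at this
            simp at this
            exact hc₁.ne' this
          have hr0 : 0 < (p₁ x).toReal := ENNReal.toReal_pos hp₁0 hx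
          have hpt' := hpt x
          rw [ENNReal.toReal_inv] at hpt'
          have hexp : 1 + ε ≤ (p x)⁻¹ * (p₁ x).toReal := by
            have := hp0 x
            rw [← div_eq_inv_mul, le_div_iff₀ this]
            rw [mul_assoc, mul_left_comm, inv_mul_le_iff₀ hr0] at hpt'
            linarith
          calc _ ≤ (u x ^ (p x)⁻¹ * cubeVol n j ^ (-((p₁ x)⁻¹).toReal)) ^ (p₁ x).toReal :=
                ENNReal.rpow_le_rpow (hg x) hr0.le
            _ = u x ^ ((p x)⁻¹ * (p₁ x).toReal) * (cubeVol n j)⁻¹ := by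
                rw [ENNReal.mul_rpow_of_nonneg _ _ hr0.le, ← ENNReal.rpow_mul,
                  ← ENNReal.rpow_mul, ENNReal.toReal_inv, neg_mul, inv_mul_cancel₀ hr0.ne',
                  ENNReal.rpow_neg_one]
            _ ≤ u x ^ (1 + ε) * (cubeVol n j)⁻¹ := by
                gcongr ?_ * _
                exact ENNReal.rpow_le_rpow_of_exponent_ge (hu1 x) hexp
            _ = (L⁻¹) ^ (1 + ε) *
                ((cubeVol n j)⁻¹ * (b j x * cubeVol n j / T j) ^ (1 + ε)) := by
                simp only [u]
                rw [div_eq_mul_inv _ L, ENNReal.mul_rpow_of_nonneg _ _ (by linarith)]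
                ring
            _ ≤ (L⁻¹) ^ (1 : ℝ) *
                ((cubeVol n j)⁻¹ * (b j x * cubeVol n j / T j) ^ (1 + ε)) := by
                gcongr ?_ * _
                exact ENNReal.rpow_le_rpow_of_exponent_ge (ENNReal.inv_le_one.2 hL1)
                  (by linarith)
            _ = _ := by rw [ENNReal.rpow_one]
        -- `L ≥ 2 ^ p₀` keeps the essential supremum below `1 / 2`
        have hsup : ∀ x, p₁ x = ∞ →
            seqBlocks s₁ γ j x / (M * lam) / (T j / B) ^ (p x)⁻¹ ≤ 2⁻¹ := fun x hx => by
          refine (hg x).trans ?_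
          rw [hx]
          simp only [ENNReal.inv_top, ENNReal.toReal_zero, neg_zero, ENNReal.rpow_zero, mul_one]
          have hpx := hp0 x
          calc u x ^ (p x)⁻¹ ≤ (L⁻¹) ^ (p x)⁻¹ :=
                ENNReal.rpow_le_rpow (huL x) (by positivity)
            _ = (2 : ℝ≥0∞) ^ (-(((b₀ : ℝ) + 2) * (p x)⁻¹)) := by
                rw [hL, ← ENNReal.rpow_neg, ← ENNReal.rpow_mul, neg_mul]
            _ ≤ (2 : ℝ≥0∞) ^ (-1 : ℝ) := by
                refine ENNReal.rpow_le_rpow_of_exponent_le (by norm_num) ?_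
                have : 1 ≤ ((b₀ : ℝ) + 2) * (p x)⁻¹ := by
                  rw [← div_eq_mul_inv, le_div_iff₀ hpx]
                  linarith [hpb x]
                linarith
            _ = 2⁻¹ := ENNReal.rpow_neg_one _
        have hmtop : MeasurableSet {x | p₁ x = ∞} := hp₁m (measurableSet_singleton _)
        have hmfin : MeasurableSet {x | p₁ x ≠ ∞} := hmtop.compl
        have hint : ∫⁻ x in {x | p₁ x ≠ ∞},
            (seqBlocks s₁ γ j x / (M * lam) / (T j / B) ^ (p x)⁻¹) ^ (p₁ x).toReal ≤ 2⁻¹ := by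
          calc _ ≤ ∫⁻ x in {x | p₁ x ≠ ∞},
                L⁻¹ * ((cubeVol n j)⁻¹ * (b j x * cubeVol n j / T j) ^ (1 + ε)) :=
                setLIntegral_mono' hmfin fun x hx => hpow x hx
            _ ≤ ∫⁻ x, L⁻¹ * ((cubeVol n j)⁻¹ * (b j x * cubeVol n j / T j) ^ (1 + ε)) :=
                setLIntegral_le_lintegral _ _
            _ = L⁻¹ * ∫⁻ x, (cubeVol n j)⁻¹ * (b j x * cubeVol n j / T j) ^ (1 + ε) :=
                lintegral_const_mul' _ _ (ENNReal.inv_ne_top.2 hL0)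
            _ ≤ 4⁻¹ * 2 := by
                gcongr
                exact hTint j
            _ = 2⁻¹ := by
                rw [show (4 : ℝ≥0∞) = 2 * 2 by norm_num,
                  ENNReal.mul_inv (by simp) (by simp), mul_assoc,
                  ENNReal.inv_mul_cancel (by simp) (by simp), mul_one]
        calc _ ≤ (2⁻¹ : ℝ≥0∞) + 2⁻¹ := by
              refine add_le_add hint (essSup_le_of_ae_le _ ?_)
              exact ae_restrict_of_forall_mem hmtop fun x hx => hsup x hx
          _ = 1 := ENNReal.inv_two_add_inv_two
    _ = (∑' j, T j) / B := by simp only [div_eq_mul_inv, ENNReal.tsum_mul_right]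
    _ ≤ 1 := ENNReal.div_le_of_le_mul (by rw [one_mul]; exact hTs)

end
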